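/- Let G be a finite r-regular graph with girth at least 5, equipped with a random label assignment with probabilities (p₀,p). Then for any vertex u and any neighbour v of u: w₀ = P(u∈W₀) = (1−p₀)^{r+1}; b₀ = P(u∈B₀) = r·p₀·(1−p₀)^r; q₀ = P(u∈W₀ ∧ v∈W₀) = (1−p₀)^{2r}; s₀ = P(u∈B₀ ∧ v∈W₀) = (r−1)·p₀·(1−p₀)^{2r−1}; and t₀ = P(u∈B₀ ∧ v∈B₀) = (r−1)²·p₀²·(1−p₀)^{2r−2}. -/

import Mathlib

/-!
At time `0` the purple vertices are exactly those carrying the label `0`, so each vertex is purple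
independently with probability `p₀`. Neighbours `u` and `v` have no common neighbour, so what
happens on `N(u)` is independent of what happens on `N(v)`. Since `v ∈ N(u)` and `u ∈ N(v)`, the
colours of both `u` and `v` can be read off these two neighbourhoods, and each of the joint
probabilities is a product of two binomial ones.
-/

open MeasureTheory ProbabilityTheory Filter Set

namespace InducedForest

variable {V : Type*}

/-- Label `i` is *relevant* for vertex `v` (w.r.t. the label assignment `S`):
either `i = 0` and `0 ∈ S v`, or `i ∈ S v`, no `j < i` is relevant for `v`, and
there is a unique neighbour of `v` having a relevant label strictly smaller than `i`. -/
def Relevant (G : SimpleGraph V) (S : V → Set ℕ) (i : ℕ) : V → Prop :=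
  Nat.strongRecOn i (fun i ih v =>
    (i = 0 ∧ 0 ∈ S v) ∨
    (i ∈ S v ∧ (∀ j, (h : j < i) → ¬ ih j h v) ∧
      (∃! u, G.Adj v u ∧ ∃ j, ∃ h : j < i, ih j h u)))

/-- `v` has some relevant label `≤ l`, i.e. `v ∈ R_{≤ l}`. -/
def RelevantLe (G : SimpleGraph V) (S : V → Set ℕ) (l : ℕ) (v : V) : Prop :=
  ∃ i ≤ l, Relevant G S i v

inductive Colour | white | blue | orange | purple
deriving DecidableEq

open Classical in
/-- The colour of `u` at time `l`. -/
noncomputable def colourAt (G : SimpleGraph V) (S : V → Set ℕ) (l : ℕ) (u : V) : Colour :=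
  if RelevantLe G S l u then Colour.purple
  else if ∀ v, G.Adj u v → ¬ RelevantLe G S l v then Colour.white
  else if ∃! v, G.Adj u v ∧ RelevantLe G S l v then Colour.blue
  else Colour.orange

/-- The set `W_l` of white vertices at time `l`. -/
def White (G : SimpleGraph V) (S : V → Set ℕ) (l : ℕ) : Set V :=
  {u | ¬ RelevantLe G S l u ∧ ∀ v, G.Adj u v → ¬ RelevantLe G S l v}

/-- The set `B_l` of blue vertices at time `l`. -/
def Blue (G : SimpleGraph V) (S : V → Set ℕ) (l : ℕ) : Set V :=
  {u | ¬ RelevantLe G S l u ∧ ∃! v, G.Adj u v ∧ RelevantLe G S l v}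
/-- The label assignment determined by a sample point `ω`. -/
def labels (ω : V → ℕ → Bool) : V → Set ℕ := fun v => {i | ω v i = true}

/-- `μ` is the random label assignment with probabilities `(p₀, p)`: the events
`i ∈ S(v)` are mutually independent, and each has probability `p₀` if `i = 0`
and `p` if `i ≥ 1`. -/
def IsLabelMeasure (μ : Measure (V → ℕ → Bool)) (p₀ p : ℝ) : Prop :=
  IsProbabilityMeasure μ ∧
  iIndepSet (fun q : V × ℕ => {ω : V → ℕ → Bool | ω q.1 q.2 = true}) μ ∧
  ∀ (v : V) (i : ℕ), μ {ω | ω v i = true} = ENNReal.ofReal (if i = 0 then p₀ else p)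

/-- Event that `u` is white at time `l`. -/
def WEv (G : SimpleGraph V) (l : ℕ) (u : V) : Set (V → ℕ → Bool) :=
  {ω | u ∈ White G (labels ω) l}

/-- Event that `u` is blue at time `l`. -/
def BEv (G : SimpleGraph V) (l : ℕ) (u : V) : Set (V → ℕ → Bool) :=
  {ω | u ∈ Blue G (labels ω) l}

/-- Event that `u` has relevant label `i`, i.e. `u ∈ R_i`. -/
def REv (G : SimpleGraph V) (i : ℕ) (u : V) : Set (V → ℕ → Bool) :=
  {ω | Relevant G (labels ω) i u}

/-- Event that `u` has a relevant label `≤ l`, i.e. `u ∈ R_{≤ l}`. -/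
def RLeEv (G : SimpleGraph V) (l : ℕ) (u : V) : Set (V → ℕ → Bool) :=
  {ω | RelevantLe G (labels ω) l u}

/-- `G` is `r`-regular. -/
def IsRegular (G : SimpleGraph V) (r : ℕ) : Prop :=
  ∀ v : V, (G.neighborSet v).ncard = r

open scoped Finset

section IndependentEvents

variable {Ω ι : Type*} {E : ι → Set Ω} {s t : Finset ι}

open Classical in
/-- The random subset of `s` formed by the indices `i` for which the event `E i` occurs. -/
noncomputable def occurring (E : ι → Set Ω) (s : Finset ι) (ω : Ω) : Finset ι :=
  {i ∈ s | ω ∈ E i}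

lemma mem_occurring {i : ι} {ω : Ω} : i ∈ occurring E s ω ↔ i ∈ s ∧ ω ∈ E i := by
  classical exact Finset.mem_filter

lemma occurring_subset (E : ι → Set Ω) (s : Finset ι) (ω : Ω) : occurring E s ω ⊆ s :=
  fun _ hi ↦ (mem_occurring.1 hi).1

lemma occurring_eq_iff {A : Finset ι} (hA : A ⊆ s) {ω : Ω} :
    occurring E s ω = A ↔ ∀ i ∈ s, (ω ∈ E i ↔ i ∈ A) := by
  simp only [Finset.ext_iff, mem_occurring]
  exact ⟨fun h i hi ↦ by simpa [hi] using h i, fun h i ↦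
    ⟨fun hi ↦ (h i hi.1).1 hi.2, fun hi ↦ ⟨hA hi, (h i (hA hi)).2 hi⟩⟩⟩

lemma occurring_eq_empty_iff {ω : Ω} : occurring E s ω = ∅ ↔ ∀ i ∈ s, ω ∉ E i := by
  simp [occurring_eq_iff]

lemma card_occurring_eq_one_iff {ω : Ω} : #(occurring E s ω) = 1 ↔ ∃! i, i ∈ s ∧ ω ∈ E i := by
  simp only [Finset.card_eq_one_iff_existsUnique, mem_occurring]

lemma occurring_mem_powersetCard_self {k : ℕ} {ω : Ω} :
    occurring E s ω ∈ s.powersetCard k ↔ #(occurring E s ω) = k := by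
  simp [Finset.mem_powersetCard, occurring_subset]

lemma occurring_mem_powersetCard_erase [DecidableEq ι] {i : ι} (hi : i ∈ s) {k : ℕ} {ω : Ω} :
    occurring E s ω ∈ (s.erase i).powersetCard k ↔ ω ∉ E i ∧ #(occurring E s ω) = k := by
  simp [Finset.mem_powersetCard, Finset.subset_erase, occurring_subset, mem_occurring, hi]

lemma setOf_occurring_eq {A : Finset ι} (hA : A ⊆ s) :
    {ω | occurring E s ω = A} = ⋂ i ∈ s, (fun ω ↦ ω ∈ E i) ⁻¹' {P | P ↔ i ∈ A} := by
  ext ω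
  simp [occurring_eq_iff hA]

variable [MeasurableSpace Ω] {μ : Measure Ω}

lemma measurableSet_occurring_eq (hE : ∀ i, MeasurableSet (E i)) {A : Finset ι} (hA : A ⊆ s) :
    MeasurableSet {ω | occurring E s ω = A} := by
  rw [setOf_occurring_eq hA]
  exact Finset.measurableSet_biInter s fun i _ ↦ (hE i).mem .of_discrete

lemma iIndepFun_mem (hind : iIndepSet E μ) : iIndepFun (fun i ω ↦ ω ∈ E i) μ :=
  hind.iIndep_comap_mem

lemma measureReal_occurring_eq [DecidableEq ι] (hE : ∀ i, MeasurableSet (E i))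
    (hind : iIndepSet E μ) {A : Finset ι} (hA : A ⊆ s) :
    μ.real {ω | occurring E s ω = A} =
      (∏ i ∈ A, μ.real (E i)) * ∏ i ∈ s \ A, (1 - μ.real (E i)) := by
  have := hind.isProbabilityMeasure
  have factor (i : ι) : μ.real ((fun ω ↦ ω ∈ E i) ⁻¹' {P | P ↔ i ∈ A}) =
      if i ∈ A then μ.real (E i) else 1 - μ.real (E i) := by
    split_ifs with hi
    · simp [hi]
    · simp only [hi, iff_false, ← probReal_compl_eq_one_sub (hE i)]
      rfl
  rw [setOf_occurring_eq hA, measureReal_def,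
    (iIndepFun_mem hind).measure_inter_preimage_eq_mul s fun _ _ ↦ .of_discrete,
    ENNReal.toReal_prod]
  simp only [← measureReal_def, factor]
  rw [Finset.prod_ite, Finset.filter_mem_eq_inter, Finset.inter_eq_right.2 hA,
    Finset.filter_notMem_eq_sdiff]

lemma measureReal_occurring_mem_powersetCard (hE : ∀ i, MeasurableSet (E i))
    (hind : iIndepSet E μ) {p : ℝ} (hp : ∀ i ∈ s, μ.real (E i) = p) (hts : t ⊆ s) (k : ℕ) :
    μ.real {ω | occurring E s ω ∈ t.powersetCard k} =
      (#t).choose k * (p ^ k * (1 - p) ^ (#s - k)) := by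
  classical
  have hsub {A : Finset ι} (hA : A ∈ t.powersetCard k) : A ⊆ s :=
    (Finset.mem_powersetCard.1 hA).1.trans hts
  have hunion : {ω | occurring E s ω ∈ t.powersetCard k} =
      ⋃ A ∈ t.powersetCard k, {ω | occurring E s ω = A} := by
    ext ω
    simp
  have hatom {A : Finset ι} (hA : A ∈ t.powersetCard k) :
      μ.real {ω | occurring E s ω = A} = p ^ k * (1 - p) ^ (#s - k) := by
    rw [measureReal_occurring_eq hE hind (hsub hA),
      Finset.prod_congr rfl fun i hi ↦ hp i (hsub hA hi),
      Finset.prod_congr rfl fun i hi ↦ congrArg (1 - ·) (hp i (Finset.sdiff_subset hi)),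
      Finset.prod_const, Finset.prod_const, Finset.card_sdiff_of_subset (hsub hA),
      (Finset.mem_powersetCard.1 hA).2]
  have := hind.isProbabilityMeasure
  rw [hunion, measureReal_biUnion_finset
      (fun A _ B _ hAB ↦ Set.disjoint_left.2 fun ω hA hB ↦ hAB (hA.symm.trans hB))
      (fun A hA ↦ measurableSet_occurring_eq hE (hsub hA)),
    Finset.sum_congr rfl fun A hA ↦ hatom hA, Finset.sum_const, nsmul_eq_mul,
    Finset.card_powersetCard]

lemma measureReal_occurring_mem_and_occurring_mem (hE : ∀ i, MeasurableSet (E i))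
    (hind : iIndepSet E μ) (hst : Disjoint s t) (F H : Set (Finset ι)) :
    μ.real {ω | occurring E s ω ∈ F ∧ occurring E t ω ∈ H} =
      μ.real {ω | occurring E s ω ∈ F} * μ.real {ω | occurring E t ω ∈ H} := by
  classical
  let trueIndices (r : Finset ι) (P : r → Prop) : Finset ι :=
    Finset.map (.subtype _) {i | P i}
  have hocc (r : Finset ι) (ω : Ω) : occurring E r ω = trueIndices r fun i ↦ ω ∈ E i := by
    ext i
    simp [trueIndices, mem_occurring, and_comm]
  have hmul := ((iIndepFun_mem hind).indepFun_finset s t hst fun i ↦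
    (hE i).mem).measure_inter_preimage_eq_mul
      (trueIndices s ⁻¹' F) (trueIndices t ⁻¹' H) .of_discrete .of_discrete
  simp only [hocc]
  exact (congrArg ENNReal.toReal hmul).trans ENNReal.toReal_mul

lemma measureReal_occurring_mem_powersetCard_and (hE : ∀ i, MeasurableSet (E i))
    (hind : iIndepSet E μ) {p : ℝ} (hp : ∀ i, μ.real (E i) = p) (hst : Disjoint s t)
    {s' t' : Finset ι} (hs : s' ⊆ s) (ht : t' ⊆ t) (k m : ℕ) :
    μ.real {ω | occurring E s ω ∈ s'.powersetCard k ∧ occurring E t ω ∈ t'.powersetCard m} =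
      (#s').choose k * (p ^ k * (1 - p) ^ (#s - k)) *
        ((#t').choose m * (p ^ m * (1 - p) ^ (#t - m))) := by
  rw [← measureReal_occurring_mem_powersetCard hE hind (fun i _ ↦ hp i) hs k,
    ← measureReal_occurring_mem_powersetCard hE hind (fun i _ ↦ hp i) ht m]
  exact measureReal_occurring_mem_and_occurring_mem hE hind hst
    (s'.powersetCard k) (t'.powersetCard m)

end IndependentEvents

section Colours

variable {G : SimpleGraph V} {l : ℕ} {u v : V} [Fintype (G.neighborSet u)]

lemma mem_WEv_iff {ω : V → ℕ → Bool} :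
    ω ∈ WEv G l u ↔ ω ∉ RLeEv G l u ∧ #(occurring (RLeEv G l) (G.neighborFinset u) ω) = 0 := by
  simp [occurring_eq_empty_iff, WEv, RLeEv, White]

lemma mem_BEv_iff {ω : V → ℕ → Bool} :
    ω ∈ BEv G l u ↔ ω ∉ RLeEv G l u ∧ #(occurring (RLeEv G l) (G.neighborFinset u) ω) = 1 := by
  simp [card_occurring_eq_one_iff, BEv, RLeEv, Blue]

lemma WEv_eq_occurring : WEv G l u = {ω |
    occurring (RLeEv G l) {u} ω ∈ Finset.powersetCard 0 {u} ∧
      occurring (RLeEv G l) (G.neighborFinset u) ω ∈ (G.neighborFinset u).powersetCard 0} := by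
  ext ω
  simp [mem_WEv_iff, occurring_eq_empty_iff]

lemma BEv_eq_occurring : BEv G l u = {ω |
    occurring (RLeEv G l) {u} ω ∈ Finset.powersetCard 0 {u} ∧
      occurring (RLeEv G l) (G.neighborFinset u) ω ∈ (G.neighborFinset u).powersetCard 1} := by
  ext ω
  rw [mem_BEv_iff, Set.mem_ofPred_eq, occurring_mem_powersetCard_self,
    occurring_mem_powersetCard_self, Finset.card_eq_zero, occurring_eq_empty_iff]
  simp only [Finset.mem_singleton, forall_eq]

lemma notMem_RLeEv_of_card_occurring_eq_zero {ω : V → ℕ → Bool} (huv : G.Adj u v)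
    (h : #(occurring (RLeEv G l) (G.neighborFinset u) ω) = 0) : ω ∉ RLeEv G l v :=
  occurring_eq_empty_iff.1 (Finset.card_eq_zero.1 h) v ((G.mem_neighborFinset u v).2 huv)

variable [Fintype (G.neighborSet v)]

lemma WEv_inter_WEv_eq_occurring (huv : G.Adj u v) : WEv G l u ∩ WEv G l v = {ω |
    occurring (RLeEv G l) (G.neighborFinset u) ω ∈ (G.neighborFinset u).powersetCard 0 ∧
      occurring (RLeEv G l) (G.neighborFinset v) ω ∈ (G.neighborFinset v).powersetCard 0} := by
  ext ω
  rw [Set.mem_inter_iff, mem_WEv_iff, mem_WEv_iff, Set.mem_ofPred_eq,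
    occurring_mem_powersetCard_self, occurring_mem_powersetCard_self]
  exact ⟨fun h ↦ ⟨h.1.2, h.2.2⟩, fun h ↦
    ⟨⟨notMem_RLeEv_of_card_occurring_eq_zero huv.symm h.2, h.1⟩,
      notMem_RLeEv_of_card_occurring_eq_zero huv h.1, h.2⟩⟩

variable [DecidableEq V]

lemma BEv_inter_WEv_eq_occurring (huv : G.Adj u v) : BEv G l u ∩ WEv G l v = {ω |
    occurring (RLeEv G l) (G.neighborFinset u) ω ∈
        ((G.neighborFinset u).erase v).powersetCard 1 ∧
      occurring (RLeEv G l) (G.neighborFinset v) ω ∈ (G.neighborFinset v).powersetCard 0} := by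
  ext ω
  rw [Set.mem_inter_iff, mem_BEv_iff, mem_WEv_iff, Set.mem_ofPred_eq,
    occurring_mem_powersetCard_erase ((G.mem_neighborFinset u v).2 huv),
    occurring_mem_powersetCard_self]
  exact ⟨fun h ↦ ⟨⟨h.2.1, h.1.2⟩, h.2.2⟩, fun h ↦
    ⟨⟨notMem_RLeEv_of_card_occurring_eq_zero huv.symm h.2, h.1.2⟩, h.1.1, h.2⟩⟩

lemma BEv_inter_BEv_eq_occurring (huv : G.Adj u v) : BEv G l u ∩ BEv G l v = {ω |
    occurring (RLeEv G l) (G.neighborFinset u) ω ∈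
        ((G.neighborFinset u).erase v).powersetCard 1 ∧
      occurring (RLeEv G l) (G.neighborFinset v) ω ∈
        ((G.neighborFinset v).erase u).powersetCard 1} := by
  ext ω
  rw [Set.mem_inter_iff, mem_BEv_iff, mem_BEv_iff, Set.mem_ofPred_eq,
    occurring_mem_powersetCard_erase ((G.mem_neighborFinset u v).2 huv),
    occurring_mem_powersetCard_erase ((G.mem_neighborFinset v u).2 huv.symm)]
  tauto

end Colours

section TimeZero

variable {G : SimpleGraph V} {μ : Measure (V → ℕ → Bool)} {p₀ p : ℝ}

lemma relevant_zero_iff {S : V → Set ℕ} {v : V} : Relevant G S 0 v ↔ 0 ∈ S v := by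
  rw [Relevant, Nat.strongRecOn_eq]
  simp

lemma RLeEv_zero (v : V) : RLeEv G 0 v = {ω | ω v 0 = true} := by
  ext ω
  simp [RLeEv, RelevantLe, relevant_zero_iff, labels]

lemma measurableSet_RLeEv_zero (v : V) : MeasurableSet (RLeEv G 0 v) := by
  rw [RLeEv_zero]
  exact measurableSet_eq_fun (by fun_prop) measurable_const

lemma IsLabelMeasure.iIndepSet_RLeEv_zero (hμ : IsLabelMeasure μ p₀ p) :
    iIndepSet (RLeEv G 0) μ := by
  rw [funext RLeEv_zero]
  exact hμ.2.1.precomp (Prod.mk_left_injective 0)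

lemma IsLabelMeasure.measureReal_RLeEv_zero (hμ : IsLabelMeasure μ p₀ p) (hp₀ : 0 ≤ p₀) (v : V) :
    μ.real (RLeEv G 0 v) = p₀ := by
  rw [RLeEv_zero, measureReal_def, hμ.2.2 v 0, if_pos rfl, ENNReal.toReal_ofReal hp₀]

end TimeZero

lemma IsRegular.degree_eq {G : SimpleGraph V} {r : ℕ} (h : IsRegular G r) (v : V)
    [Fintype (G.neighborSet v)] : G.degree v = r := by
  rw [← h v, Set.ncard_eq_toFinset_card', ← SimpleGraph.neighborFinset_def,
    SimpleGraph.card_neighborFinset_eq_degree]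

lemma disjoint_neighborSet_of_four_le_egirth {G : SimpleGraph V} (hg : 4 ≤ G.egirth) {u v : V}
    (huv : G.Adj u v) : Disjoint (G.neighborSet u) (G.neighborSet v) := by
  refine Set.disjoint_left.2 fun x (hux : G.Adj u x) (hvx : G.Adj v x) ↦ ?_
  let triangle : G.Walk u u := .cons huv (.cons hvx (.cons hux.symm .nil))
  have hcycle : triangle.IsCycle := by
    simp [triangle, SimpleGraph.Walk.cons_isCycle_iff, huv.ne, huv.ne', hux.ne, hux.ne', hvx.ne]
  have hlength : (4 : ℕ∞) ≤ (3 : ℕ) := SimpleGraph.le_egirth.1 hg u triangle hcycle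
  exact absurd hlength (by norm_num)

theorem initial_values_general (G : SimpleGraph V) (p₀ p : ℝ) (hp₀ : 0 ≤ p₀)
    (μ : Measure (V → ℕ → Bool)) (hμ : IsLabelMeasure μ p₀ p) (u v : V)
    [Fintype (G.neighborSet u)] [Fintype (G.neighborSet v)] (huv : G.Adj u v)
    (hdisj : Disjoint (G.neighborSet u) (G.neighborSet v)) :
    μ.real (WEv G 0 u) = (1 - p₀) ^ (G.degree u + 1) ∧
    μ.real (BEv G 0 u) = G.degree u * p₀ * (1 - p₀) ^ G.degree u ∧
    μ.real (WEv G 0 u ∩ WEv G 0 v) = (1 - p₀) ^ (G.degree u + G.degree v) ∧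
    μ.real (BEv G 0 u ∩ WEv G 0 v) =
      ((G.degree u : ℝ) - 1) * p₀ * (1 - p₀) ^ (G.degree u + G.degree v - 1) ∧
    μ.real (BEv G 0 u ∩ BEv G 0 v) = ((G.degree u : ℝ) - 1) * ((G.degree v : ℝ) - 1) * p₀ ^ 2 *
      (1 - p₀) ^ (G.degree u + G.degree v - 2) := by
  classical
  have law {s t s' t' : Finset V} := measureReal_occurring_mem_powersetCard_and
    (measurableSet_RLeEv_zero (G := G)) hμ.iIndepSet_RLeEv_zero (hμ.measureReal_RLeEv_zero hp₀)
    (s := s) (t := t) (s' := s') (t' := t')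
  have hu : Disjoint {u} (G.neighborFinset u) := by simp
  have hN : Disjoint (G.neighborFinset u) (G.neighborFinset v) := by
    simpa [← Finset.disjoint_coe] using hdisj
  obtain ⟨a, ha⟩ : ∃ a, G.degree u = a + 1 :=
    Nat.exists_eq_add_one.2 ((G.degree_pos_iff_exists_adj u).2 ⟨v, huv⟩)
  obtain ⟨b, hb⟩ : ∃ b, G.degree v = b + 1 :=
    Nat.exists_eq_add_one.2 ((G.degree_pos_iff_exists_adj v).2 ⟨u, huv.symm⟩)
  have hau : #((G.neighborFinset u).erase v) = a := by simp [huv, ha]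
  have hbv : #((G.neighborFinset v).erase u) = b := by simp [huv.symm, hb]
  refine ⟨?_, ?_, ?_, ?_, ?_⟩
  · rw [WEv_eq_occurring, law hu subset_rfl subset_rfl]
    simp [ha, pow_succ']
  · rw [BEv_eq_occurring, law hu subset_rfl subset_rfl]
    simp only [Finset.card_singleton, Nat.choose_zero_right, Nat.choose_one_right, Nat.cast_one,
      pow_zero, pow_one, one_mul, tsub_zero, SimpleGraph.card_neighborFinset_eq_degree, ha,
      add_tsub_cancel_right]
    ring
  · rw [WEv_inter_WEv_eq_occurring huv, law hN subset_rfl subset_rfl]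
    simp [pow_add]
  · rw [BEv_inter_WEv_eq_occurring huv, law hN (Finset.erase_subset _ _) subset_rfl, hau]
    simp only [Nat.choose_zero_right, Nat.choose_one_right, Nat.cast_add, Nat.cast_one, pow_zero,
      pow_one, one_mul, tsub_zero, SimpleGraph.card_neighborFinset_eq_degree, ha, hb,
      add_tsub_cancel_right, Nat.add_succ_sub_one]
    ring
  · rw [BEv_inter_BEv_eq_occurring huv,
      law hN (Finset.erase_subset _ _) (Finset.erase_subset _ _), hau, hbv]
    have hab : a + 1 + (b + 1) - 2 = a + b := by omega
    simp only [Nat.choose_one_right, Nat.cast_add, Nat.cast_one, pow_one,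
      SimpleGraph.card_neighborFinset_eq_degree, ha, hb, hab, add_tsub_cancel_right]
    ring

/-- The initial values `w₀, b₀, q₀, s₀, t₀` in an `r`-regular graph of
girth at least 5. -/
theorem initial_values
    [Fintype V] (r : ℕ) (G : SimpleGraph V)
    (hreg : IsRegular G r) (hg : (5 : ℕ∞) ≤ G.egirth)
    (p₀ p : ℝ) (hp₀ : p₀ ∈ Ioo (0 : ℝ) 1) (hp : p ∈ Ioo (0 : ℝ) 1)
    (μ : Measure (V → ℕ → Bool)) (hμ : IsLabelMeasure μ p₀ p)
    (u v : V) (huv : G.Adj u v) :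
    (μ (WEv G 0 u)).toReal = (1 - p₀) ^ (r + 1) ∧
    (μ (BEv G 0 u)).toReal = r * p₀ * (1 - p₀) ^ r ∧
    (μ (WEv G 0 u ∩ WEv G 0 v)).toReal = (1 - p₀) ^ (2 * r) ∧
    (μ (BEv G 0 u ∩ WEv G 0 v)).toReal = ((r : ℝ) - 1) * p₀ * (1 - p₀) ^ (2 * r - 1) ∧
    (μ (BEv G 0 u ∩ BEv G 0 v)).toReal
      = ((r : ℝ) - 1) ^ 2 * p₀ ^ 2 * (1 - p₀) ^ (2 * r - 2) := by
  classical
  have hdisj := disjoint_neighborSet_of_four_le_egirth (le_trans (by norm_num) hg) huv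
  simpa [measureReal_def, hreg.degree_eq, ← two_mul, ← pow_two] using
    initial_values_general G p₀ p hp₀.1.le μ hμ u v huv hdisj

end InducedForest
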